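/- arXiv:2105.00413 — 2 statements merged into one kernel-verified Lean document; each statement's English description precedes it below -/
import Mathlib

section
/- If N is a right R-module such that Ext^1_R(N, M) = 0 for every right R-module M of n-weak flat dimension at most k, then Tor^R_1(A, N) = 0 for every left R-module A of n-weak injective dimension at most k. -/
/-!
Common definitions for formalizing "(n,k)-weak cotorsion modules" over an arbitrary
(not necessarily commutative) ring `R`.  Left `R`-modules are objects of
`ModuleCat R`, right `R`-modules are objects of `ModuleCat Rᵐᵒᵖ`.

Since Mathlib does not provide `Tor` of a right module with a left module over a
noncommutative ring, we encode the vanishing of `Tor_i^R(N, M)` (for `N` a right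
module and `M` a left module) by the equivalent condition
`Ext^i_{Rᵐᵒᵖ}(N, M⋆) = 0`, where `M⋆ = Hom_ℤ(M, ℚ/ℤ)` is the character module
(a right module).  This is equivalent because `ℚ/ℤ` is an injective cogenerator:
`Ext^i_{Rᵐᵒᵖ}(N, M⋆) ≅ (Tor_i^R(N, M))⋆`, and an abelian group vanishes iff its
character group does.
-/

open CategoryTheory

universe u

noncomputable section

/-- The character group `Hom_ℤ(N, ℚ/ℤ)`. -/
def CharGroup (N : Type u) [AddCommGroup N] : Type u := N →+ AddCircle (1 : ℚ)

instance (N : Type u) [AddCommGroup N] : AddCommGroup (CharGroup N) :=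
  inferInstanceAs (AddCommGroup (N →+ AddCircle (1 : ℚ)))

namespace CharGroup

variable {N : Type u} [AddCommGroup N]

/-- View an element of the character group as an additive monoid hom. -/
def toHom (f : CharGroup N) : N →+ AddCircle (1 : ℚ) := f

/-- Build an element of the character group from an additive monoid hom. -/
def ofHom (f : N →+ AddCircle (1 : ℚ)) : CharGroup N := f

theorem hom_ext {f g : CharGroup N} (h : ∀ m, toHom f m = toHom g m) : f = g :=
  AddMonoidHom.ext h

end CharGroup

open CharGroup in
/-- Left module structure on the character group of a right module. -/
instance charGroupModuleLeft (R : Type u) [Ring R] (N : Type u) [AddCommGroup N]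
    [Module Rᵐᵒᵖ N] : Module R (CharGroup N) where
  smul r f := ofHom ((toHom f).comp
    (AddMonoidHom.mk' (fun m => MulOpposite.op r • m) (fun a b => smul_add _ a b)))
  one_smul f := hom_ext fun m => by
    show toHom f (MulOpposite.op (1 : R) • m) = toHom f m
    rw [MulOpposite.op_one, one_smul]
  mul_smul r s f := hom_ext fun m => by
    show toHom f (MulOpposite.op (r * s) • m)
      = toHom f (MulOpposite.op s • MulOpposite.op r • m)
    rw [MulOpposite.op_mul, mul_smul]
  smul_zero r := CharGroup.hom_ext fun m => rfl
  smul_add r f g := CharGroup.hom_ext fun m => rfl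
  add_smul r s f := hom_ext fun m => by
    show toHom f (MulOpposite.op (r + s) • m)
      = toHom f (MulOpposite.op r • m) + toHom f (MulOpposite.op s • m)
    rw [MulOpposite.op_add, add_smul, map_add]
  zero_smul f := hom_ext fun m => by
    show toHom f (MulOpposite.op (0 : R) • m) = 0
    rw [MulOpposite.op_zero, zero_smul, map_zero]

open CharGroup in
/-- Right module structure on the character group of a left module. -/
instance charGroupModuleRight (R : Type u) [Ring R] (N : Type u) [AddCommGroup N]
    [Module R N] : Module Rᵐᵒᵖ (CharGroup N) where
  smul r f := ofHom ((toHom f).comp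
    (AddMonoidHom.mk' (fun m => r.unop • m) (fun a b => smul_add _ a b)))
  one_smul f := hom_ext fun m => by
    show toHom f ((1 : Rᵐᵒᵖ).unop • m) = toHom f m
    rw [MulOpposite.unop_one, one_smul]
  mul_smul r s f := hom_ext fun m => by
    show toHom f ((r * s).unop • m) = toHom f (s.unop • r.unop • m)
    rw [MulOpposite.unop_mul, mul_smul]
  smul_zero r := CharGroup.hom_ext fun m => rfl
  smul_add r f g := CharGroup.hom_ext fun m => rfl
  add_smul r s f := hom_ext fun m => by
    show toHom f ((r + s).unop • m) = toHom f (r.unop • m) + toHom f (s.unop • m)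
    rw [MulOpposite.unop_add, add_smul, map_add]
  zero_smul f := hom_ext fun m => by
    show toHom f ((0 : Rᵐᵒᵖ).unop • m) = 0
    rw [MulOpposite.unop_zero, zero_smul, map_zero]

variable (R : Type u) [Ring R]

/-- `extVanish S i A B` says that `Ext^i_S(A, B) = 0`. -/
def extVanish (S : Type u) [Ring S] (i : ℕ) (A B : ModuleCat.{u} S) : Prop :=
  Subsingleton (((Ext ℤ (ModuleCat.{u} S) i).obj (Opposite.op A)).obj B)

/-- The character module of a right `R`-module, as a left `R`-module. -/
def charLeft (N : ModuleCat.{u} Rᵐᵒᵖ) : ModuleCat.{u} R :=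
  ModuleCat.of R (CharGroup N)

/-- The character module of a left `R`-module, as a right `R`-module. -/
def charRight (M : ModuleCat.{u} R) : ModuleCat.{u} Rᵐᵒᵖ :=
  ModuleCat.of Rᵐᵒᵖ (CharGroup M)

/-- `torVanish R i N M` encodes `Tor_i^R(N, M) = 0` for a right module `N` and a
left module `M`, via the character module duality
`Ext^i_R(M, N⋆) ≅ (Tor_i^R(N, M))⋆`. -/
def torVanish (i : ℕ) (N : ModuleCat.{u} Rᵐᵒᵖ) (M : ModuleCat.{u} R) : Prop :=
  extVanish R i M (charLeft R N)

/-- `K` is a special super finitely presented `S`-module (for the parameter `n`):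
`K` is the image of `F_n → F_{n-1}` in a projective resolution
`⋯ → F_{n+1} → F_n → ⋯ → F_0 → U → 0` of some module `U` in which `F_i` is finitely
generated projective for all `i ≥ n`.  (For `n = 0` the distinguished module is `U`
itself, matching `Ext^{n+1}(U, -) ≅ Ext^1(K_{n-1}, -)`.) -/
def IsSpecialSFP (S : Type u) [Ring S] (n : ℕ) (K : ModuleCat.{u} S) : Prop :=
  ∃ (U : ModuleCat.{u} S) (F : ℕ → ModuleCat.{u} S)
    (d : ∀ i, F (i + 1) →ₗ[S] F i) (π : F 0 →ₗ[S] U),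
      (∀ i, Module.Projective S (F i)) ∧
      (∀ i, n ≤ i → Module.Finite S (F i)) ∧
      Function.Surjective π ∧ Function.Exact (d 0) π ∧
      (∀ i, Function.Exact (d (i + 1)) (d i)) ∧
      (if n = 0 then Nonempty ((K : Type u) ≃ₗ[S] U)
       else Nonempty ((K : Type u) ≃ₗ[S] LinearMap.range (d (n - 1))))

/-- The `n`-weak injective dimension of a left `S`-module `M` is at most `k`. -/
def nwidLE (S : Type u) [Ring S] (n k : ℕ) (M : ModuleCat.{u} S) : Prop :=
  ∀ K : ModuleCat.{u} S, IsSpecialSFP S n K → extVanish S (k + 1) K M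

/-- The `n`-weak flat dimension of a right `R`-module `N` is at most `k`:
`Tor_{k+1}^R(N, K) = 0` for every special super finitely presented left module `K`. -/
def nwfdLE (n k : ℕ) (N : ModuleCat.{u} Rᵐᵒᵖ) : Prop :=
  ∀ K : ModuleCat.{u} R, IsSpecialSFP R n K → torVanish R (k + 1) N K

/-- A right `R`-module `M` is `(n,k)`-weak cotorsion if `Ext^1(N, M) = 0` for every
right module `N` of `n`-weak flat dimension at most `k`. -/
def IsNKWeakCotorsion (n k : ℕ) (M : ModuleCat.{u} Rᵐᵒᵖ) : Prop :=
  ∀ N : ModuleCat.{u} Rᵐᵒᵖ, nwfdLE R n k N → extVanish Rᵐᵒᵖ 1 N M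

/-- Projective dimension at most `k`, via Ext vanishing. -/
def pdLE (S : Type u) [Ring S] (k : ℕ) (K : ModuleCat.{u} S) : Prop :=
  ∀ M : ModuleCat.{u} S, extVanish S (k + 1) K M

/-- Injective dimension at most `k`, via Ext vanishing. -/
def idLE (S : Type u) [Ring S] (k : ℕ) (M : ModuleCat.{u} S) : Prop :=
  ∀ N : ModuleCat.{u} S, extVanish S (k + 1) N M

/-- Flat dimension of a right module at most `k`, via Tor vanishing. -/
def fdLE (k : ℕ) (N : ModuleCat.{u} Rᵐᵒᵖ) : Prop :=
  ∀ A : ModuleCat.{u} R, torVanish R (k + 1) N A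

/-- `l.n.sp.gldim(R) ≤ k` : every special super finitely presented left module has
projective dimension at most `k`. -/
def lnspGldimLE (n k : ℕ) : Prop :=
  ∀ K : ModuleCat.{u} R, IsSpecialSFP R n K → pdLE R k K

/-- `w.gl.dim(R) ≤ k`. -/
def wGldimLE (k : ℕ) : Prop :=
  ∀ N : ModuleCat.{u} Rᵐᵒᵖ, fdLE R k N

/-- A right `R`-module `M` is `k`-cotorsion if `Ext^1(F, M) = 0` for every right
module `F` of flat dimension at most `k`. -/
def IsKCotorsion (k : ℕ) (M : ModuleCat.{u} Rᵐᵒᵖ) : Prop :=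
  ∀ F : ModuleCat.{u} Rᵐᵒᵖ, fdLE R k F → extVanish Rᵐᵒᵖ 1 F M

/-- `φ : E → D` is a `𝒞`-precover of `D`. -/
def IsPrecover (S : Type u) [Ring S] (𝒞 : ModuleCat.{u} S → Prop)
    (E D : ModuleCat.{u} S) (φ : E →ₗ[S] D) : Prop :=
  𝒞 E ∧ ∀ F : ModuleCat.{u} S, 𝒞 F → ∀ g : F →ₗ[S] D, ∃ h : F →ₗ[S] E, φ ∘ₗ h = g

/-- `φ : E → D` is a `𝒞`-cover of `D`. -/
def IsCover (S : Type u) [Ring S] (𝒞 : ModuleCat.{u} S → Prop)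
    (E D : ModuleCat.{u} S) (φ : E →ₗ[S] D) : Prop :=
  IsPrecover S 𝒞 E D φ ∧ ∀ g : E →ₗ[S] E, φ ∘ₗ g = φ → Function.Bijective g

/-- `f : X → F` is a `𝒞`-preenvelope of `X`. -/
def IsPreenvelope (S : Type u) [Ring S] (𝒞 : ModuleCat.{u} S → Prop)
    (X F : ModuleCat.{u} S) (f : X →ₗ[S] F) : Prop :=
  𝒞 F ∧ ∀ F' : ModuleCat.{u} S, 𝒞 F' → ∀ g : X →ₗ[S] F', ∃ h : F →ₗ[S] F', h ∘ₗ f = g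

/-- A module is reduced if it has no nonzero injective submodules. -/
def IsReducedModule (S : Type u) [Ring S] (M : ModuleCat.{u} S) : Prop :=
  ∀ N : Submodule S M, Module.Injective S N → N = ⊥

/-- `D` is an `m`-th cosyzygy of `M`: there is an exact sequence
`0 → M → E^0 → ⋯ → E^{m-1} → D → 0` with each `E^i` injective. -/
def IsCosyzygy (S : Type u) [Ring S] : ℕ → ModuleCat.{u} S → ModuleCat.{u} S → Prop
  | 0, M, D => Nonempty ((M : Type u) ≃ₗ[S] D)
  | m + 1, M, D => ∃ (C E : ModuleCat.{u} S), IsCosyzygy S m M C ∧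
      Module.Injective S E ∧
      ∃ (ι : C →ₗ[S] E) (p : E →ₗ[S] D),
        Function.Injective ι ∧ Function.Surjective p ∧ Function.Exact ι p


/-- A left `R`-module `F` is flat: `Tor_1(A, F) = 0` for every right module `A`
(encoded via character duality, as above). -/
def IsFlatModule (R : Type u) [Ring R] (F : ModuleCat.{u} R) : Prop :=
  ∀ A : ModuleCat.{u} Rᵐᵒᵖ, torVanish R 1 A F

end

/-!
Flipping balanced pairings `N × A → ℚ/ℤ` identifies `Hom(N, A⋆)` with `Hom(A, N⋆)`. Dualizing a
presentation of `N` by a projective module embeds `N⋆` in an injective module, so dimension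
shifting on both sides shows that `Ext^i(N, A⋆)` vanishes iff `Ext^i(A, N⋆)` does, that is, iff
`Tor_i(N, A) = 0`. It therefore suffices that `A⋆` has `n`-weak flat dimension at most `k`, i.e.
that `Ext^{k+1}(K, A⋆⋆) = 0` for `K` special super finitely presented. All syzygies of such a `K`
are finitely presented, and for `M` finitely presented `Hom(M, A)⋆⋆ → Hom(M, A⋆⋆)` is surjective.
Since `⋆⋆` is exact, the extension property for maps into `A` that expresses `Ext^{k+1}(K, A) = 0`
passes to maps into `A⋆⋆`.
-/

section ExtVanishing

variable {C : Type*} [Category* C] [Abelian C] [HasExt C]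

theorem subsingleton_ext_succ_iff_of_projectiveResolution {X : C} (P : ProjectiveResolution X)
    (Y : C) (i : ℕ) :
    Subsingleton (Abelian.Ext X Y (i + 1)) ↔
      ∀ f : P.complex.X (i + 1) ⟶ Y, P.complex.d (i + 2) (i + 1) ≫ f = 0 →
        ∃ g : P.complex.X i ⟶ Y, P.complex.d (i + 1) i ≫ g = f := by
  refine ⟨fun _ f hf => ?_, fun h => subsingleton_of_forall_eq 0 fun α => ?_⟩
  · exact (P.extMk_eq_zero_iff f (i + 2) rfl hf i rfl).1 (Subsingleton.elim _ _)
  · obtain ⟨f, hf, rfl⟩ := P.extMk_surjective α (i + 2) rfl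
    exact (P.extMk_eq_zero_iff f (i + 2) rfl hf i rfl).2 (h f hf)

theorem subsingleton_ext_one_iff_of_projective {T : ShortComplex C} (hT : T.ShortExact)
    [Projective T.X₂] (Y : C) :
    Subsingleton (Abelian.Ext T.X₃ Y 1) ↔ ∀ f : T.X₁ ⟶ Y, ∃ g : T.X₂ ⟶ Y, T.f ≫ g = f := by
  refine ⟨fun _ f => ?_, fun h => subsingleton_of_forall_eq 0 fun α => ?_⟩
  · obtain ⟨β, hβ⟩ := Abelian.Ext.contravariant_sequence_exact₁ hT Y (Abelian.Ext.mk₀ f)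
      (add_zero 1) (Subsingleton.elim _ _)
    obtain ⟨g, rfl⟩ := (Abelian.Ext.mk₀_bijective _ _).2 β
    exact ⟨g, (Abelian.Ext.mk₀_bijective _ _).1 (by rw [← hβ, Abelian.Ext.mk₀_comp_mk₀])⟩
  · obtain ⟨β, rfl⟩ := Abelian.Ext.contravariant_sequence_exact₃ hT Y α
      (Abelian.Ext.eq_zero_of_projective _) (add_zero 1)
    obtain ⟨f, rfl⟩ := (Abelian.Ext.mk₀_bijective _ _).2 β
    obtain ⟨g, rfl⟩ := h f
    rw [← Abelian.Ext.mk₀_comp_mk₀, hT.extClass_comp_assoc]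

theorem subsingleton_ext_succ_succ_iff_of_projective {T : ShortComplex C} (hT : T.ShortExact)
    [Projective T.X₂] (Y : C) (i : ℕ) :
    Subsingleton (Abelian.Ext T.X₃ Y (i + 2)) ↔ Subsingleton (Abelian.Ext T.X₁ Y (i + 1)) := by
  refine ⟨fun _ => subsingleton_of_forall_eq 0 fun α => ?_,
    fun _ => subsingleton_of_forall_eq 0 fun α => ?_⟩
  · obtain ⟨β, rfl⟩ := Abelian.Ext.contravariant_sequence_exact₁ hT Y α (Nat.add_comm 1 (i + 1))
      (Subsingleton.elim _ _)
    rw [Abelian.Ext.eq_zero_of_projective β, Abelian.Ext.comp_zero]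
  · obtain ⟨β, rfl⟩ := Abelian.Ext.contravariant_sequence_exact₃ hT Y α
      (Abelian.Ext.eq_zero_of_projective _) (Nat.add_comm 1 (i + 1))
    rw [Subsingleton.elim β 0, Abelian.Ext.comp_zero]

theorem subsingleton_ext_one_iff_of_injective {T : ShortComplex C} (hT : T.ShortExact)
    [Injective T.X₂] (X : C) :
    Subsingleton (Abelian.Ext X T.X₁ 1) ↔ ∀ f : X ⟶ T.X₃, ∃ g : X ⟶ T.X₂, g ≫ T.g = f := by
  refine ⟨fun _ f => ?_, fun h => subsingleton_of_forall_eq 0 fun α => ?_⟩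
  · obtain ⟨β, hβ⟩ := Abelian.Ext.covariant_sequence_exact₃ X hT (Abelian.Ext.mk₀ f)
      (zero_add 1) (Subsingleton.elim _ _)
    obtain ⟨g, rfl⟩ := (Abelian.Ext.mk₀_bijective _ _).2 β
    exact ⟨g, (Abelian.Ext.mk₀_bijective _ _).1 (by rw [← hβ, Abelian.Ext.mk₀_comp_mk₀])⟩
  · obtain ⟨β, rfl⟩ := Abelian.Ext.covariant_sequence_exact₁ X hT α
      (Abelian.Ext.eq_zero_of_injective _) (zero_add 1)
    obtain ⟨f, rfl⟩ := (Abelian.Ext.mk₀_bijective _ _).2 β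
    obtain ⟨g, rfl⟩ := h f
    rw [← Abelian.Ext.mk₀_comp_mk₀, Abelian.Ext.comp_assoc_of_second_deg_zero,
      hT.comp_extClass, Abelian.Ext.comp_zero]

theorem subsingleton_ext_succ_succ_iff_of_injective {T : ShortComplex C} (hT : T.ShortExact)
    [Injective T.X₂] (X : C) (i : ℕ) :
    Subsingleton (Abelian.Ext X T.X₁ (i + 2)) ↔ Subsingleton (Abelian.Ext X T.X₃ (i + 1)) := by
  refine ⟨fun _ => subsingleton_of_forall_eq 0 fun α => ?_,
    fun _ => subsingleton_of_forall_eq 0 fun α => ?_⟩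
  · obtain ⟨β, rfl⟩ := Abelian.Ext.covariant_sequence_exact₃ X hT α rfl (Subsingleton.elim _ _)
    rw [Abelian.Ext.eq_zero_of_injective β, Abelian.Ext.zero_comp]
  · obtain ⟨β, rfl⟩ := Abelian.Ext.covariant_sequence_exact₁ X hT α
      (Abelian.Ext.eq_zero_of_injective _) rfl
    rw [Subsingleton.elim β 0, Abelian.Ext.zero_comp]

variable {S : Type u} [Ring S]

theorem extVanish_succ_iff_of_projectiveResolution {X : ModuleCat.{u} S}
    (P : ProjectiveResolution X) (Y : ModuleCat.{u} S) (i : ℕ) :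
    extVanish S (i + 1) X Y ↔
      ∀ f : P.complex.X (i + 1) ⟶ Y, P.complex.d (i + 2) (i + 1) ≫ f = 0 →
        ∃ g : P.complex.X i ⟶ Y, P.complex.d (i + 1) i ≫ g = f :=
  calc extVanish S (i + 1) X Y
    _ ↔ (P.complex.linearYonedaObj ℤ Y).ExactAt (i + 1) := by
      rw [HomologicalComplex.exactAt_iff_isZero_homology,
        ← (P.isoExt (R := ℤ) (i + 1) Y).isZero_iff, ModuleCat.isZero_iff_subsingleton]
      rfl
    _ ↔ _ := by
      rw [HomologicalComplex.exactAt_iff' _ i (i + 1) (i + 2) (by simp) (by simp),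
        ShortComplex.moduleCat_exact_iff]
      rfl

theorem extVanish_succ_iff_subsingleton_ext (X Y : ModuleCat.{u} S) (i : ℕ) :
    extVanish S (i + 1) X Y ↔ Subsingleton (Abelian.Ext X Y (i + 1)) := by
  rw [extVanish_succ_iff_of_projectiveResolution (ProjectiveResolution.of X),
    subsingleton_ext_succ_iff_of_projectiveResolution (ProjectiveResolution.of X)]

end ExtVanishing

namespace CharGroup

theorem toHom_congr {N : Type u} [AddCommGroup N] {c c' : CharGroup N} (h : c = c') (x : N) :
    c.toHom x = c'.toHom x := by
  rw [h]

section Additive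

variable {X Y Z : Type u} [AddCommGroup X] [AddCommGroup Y] [AddCommGroup Z]

/-- The contravariant functor `CharGroup` on additive maps, itself additive in the map. -/
noncomputable def map : (X →+ Y) →+ (CharGroup Y →+ CharGroup X) :=
  AddMonoidHom.compHom.flip

/-- The covariant functor sending a group to its double character group, on additive maps. -/
noncomputable def bidual : (X →+ Y) →+ (CharGroup (CharGroup X) →+ CharGroup (CharGroup Y)) :=
  map.comp map

theorem map_injective {f : X →+ Y} (hf : Function.Surjective f) : Function.Injective (map f) :=
  fun _ _ h => AddMonoidHom.cancel_right hf |>.1 h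

theorem map_surjective {f : X →+ Y} (hf : Function.Injective f) : Function.Surjective (map f) :=
  CharacterModule.dual_surjective_of_injective f.toIntLinearMap hf

theorem map_exact {f : X →+ Y} {g : Y →+ Z} (h : Function.Exact f g) :
    Function.Exact (map g) (map f) := by
  refine fun c => ⟨fun hc => ?_, ?_⟩
  · have hker : g.ker ≤ c.toHom.ker := fun y hy => by
      obtain ⟨x, rfl⟩ := (h y).1 hy
      exact toHom_congr hc x
    obtain ⟨e, he⟩ := map_surjective (QuotientAddGroup.kerLift_injective g)
      (ofHom (QuotientAddGroup.lift g.ker c.toHom hker))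
    exact ⟨e, hom_ext fun y => toHom_congr he (y : Y ⧸ g.ker)⟩
  · rintro ⟨e, rfl⟩
    exact hom_ext fun x => (congrArg e.toHom (h.apply_apply_eq_zero x)).trans e.toHom.map_zero

theorem bidual_exact {f : X →+ Y} {g : Y →+ Z} (h : Function.Exact f g) :
    Function.Exact (bidual f) (bidual g) :=
  map_exact (map_exact h)

theorem bidual_surjective {f : X →+ Y} (hf : Function.Surjective f) :
    Function.Surjective (bidual f) :=
  map_surjective (map_injective hf)

end Additive

section Linear

variable {R : Type u} [Ring R] {A B : Type u} [AddCommGroup A] [Module R A] [AddCommGroup B]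
  [Module R B] {N N' : Type u} [AddCommGroup N] [Module Rᵐᵒᵖ N] [AddCommGroup N'] [Module Rᵐᵒᵖ N']

/-- The map of left modules dual to a map of right modules. -/
noncomputable def mapLeft (f : N →ₗ[Rᵐᵒᵖ] N') : CharGroup N' →ₗ[R] CharGroup N where
  __ := map f.toAddMonoidHom
  map_smul' r c := hom_ext fun x => congrArg c.toHom (f.map_smul (MulOpposite.op r) x).symm

/-- The map of right modules dual to a map of left modules. -/
noncomputable def mapRight (f : A →ₗ[R] B) : CharGroup B →ₗ[Rᵐᵒᵖ] CharGroup A where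
  __ := map f.toAddMonoidHom
  map_smul' r c := hom_ext fun x => congrArg c.toHom (f.map_smul r.unop x).symm

/-- The adjunction between the two character module functors: both sides are the balanced pairings
`N × A → ℚ/ℤ`. -/
noncomputable def flipEquiv : (A →ₗ[R] CharGroup N) ≃ (N →ₗ[Rᵐᵒᵖ] CharGroup A) where
  toFun u :=
    { (u.toAddMonoidHom : A →+ N →+ AddCircle (1 : ℚ)).flip with
      map_smul' := fun r x => hom_ext fun a => (toHom_congr (u.map_smul r.unop a) x).symm }
  invFun v :=
    { (v.toAddMonoidHom : N →+ A →+ AddCircle (1 : ℚ)).flip with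
      map_smul' := fun r a => hom_ext fun x =>
        (toHom_congr (v.map_smul (MulOpposite.op r) x) a).symm }
  left_inv _ := rfl
  right_inv _ := rfl

theorem flipEquiv_comp (u : B →ₗ[R] CharGroup N) (f : A →ₗ[R] B) :
    flipEquiv (u ∘ₗ f) = mapRight f ∘ₗ flipEquiv u :=
  rfl

theorem injective_of_projective (P : Type u) [AddCommGroup P] [Module Rᵐᵒᵖ P]
    [Module.Projective Rᵐᵒᵖ P] : Module.Injective R (CharGroup P) where
  out X Y _ _ _ _ i hi u := by
    obtain ⟨v, hv⟩ := Module.projective_lifting_property (mapRight i) (flipEquiv u)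
      (map_surjective (f := i.toAddMonoidHom) hi)
    have hvi : flipEquiv.symm v ∘ₗ i = u := flipEquiv.injective (by
      rw [flipEquiv_comp, Equiv.apply_symm_apply, hv])
    exact ⟨flipEquiv.symm v, LinearMap.congr_fun hvi⟩

end Linear

end CharGroup

section Balance

open CharGroup

variable (R : Type u) [Ring R]

/-- The contravariant functor `charLeft` on morphisms. -/
noncomputable def charLeftMap {N N' : ModuleCat.{u} Rᵐᵒᵖ} (f : N ⟶ N') :
    charLeft R N' ⟶ charLeft R N :=
  ModuleCat.ofHom (X := CharGroup N') (Y := CharGroup N) (mapLeft f.hom)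

theorem charLeftMap_comp {N N' N'' : ModuleCat.{u} Rᵐᵒᵖ} (f : N ⟶ N') (g : N' ⟶ N'') :
    charLeftMap R (f ≫ g) = charLeftMap R g ≫ charLeftMap R f :=
  rfl

theorem charLeftMap_zero (N N' : ModuleCat.{u} Rᵐᵒᵖ) : charLeftMap R (0 : N ⟶ N') = 0 :=
  ModuleCat.hom_ext <| LinearMap.ext fun c => hom_ext fun _ => c.toHom.map_zero

/-- The sequence of left modules dual to a sequence of right modules. It is an `abbrev` so that
instances on `charLeft R T.X₂` apply to its middle term. -/
noncomputable abbrev charLeftShortComplex (T : ShortComplex (ModuleCat.{u} Rᵐᵒᵖ)) :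
    ShortComplex (ModuleCat.{u} R) where
  f := charLeftMap R T.g
  g := charLeftMap R T.f
  zero := by rw [← charLeftMap_comp, T.zero, charLeftMap_zero]

theorem charLeftShortComplex_shortExact {T : ShortComplex (ModuleCat.{u} Rᵐᵒᵖ)}
    (hT : T.ShortExact) : (charLeftShortComplex R T).ShortExact :=
  ModuleCat.shortComplex_shortExact _
    (map_exact (f := T.f.hom.toAddMonoidHom) (g := T.g.hom.toAddMonoidHom)
      ((ShortComplex.ShortExact.moduleCat_exact_iff_function_exact T).1 hT.exact))
    (map_injective (f := T.g.hom.toAddMonoidHom) hT.moduleCat_surjective_g)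
    (map_surjective (f := T.f.hom.toAddMonoidHom) hT.moduleCat_injective_f)

instance injective_charLeft (P : ModuleCat.{u} Rᵐᵒᵖ) [Projective P] : Injective (charLeft R P) :=
  have : Module.Projective Rᵐᵒᵖ P := (IsProjective.iff_projective P).2 inferInstance
  have : Module.Injective R (CharGroup P) := injective_of_projective P
  Module.injective_object_of_injective_module R (CharGroup P)

/-- The bijection expressing that `charLeft` and `charRight` are adjoint on the right: both sides
are the balanced pairings `N × A → ℚ/ℤ`. -/
noncomputable def charHomEquiv (N : ModuleCat.{u} Rᵐᵒᵖ) (A : ModuleCat.{u} R) :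
    (N ⟶ charRight R A) ≃ (A ⟶ charLeft R N) :=
  (ModuleCat.homEquiv (M := N) (N := .of Rᵐᵒᵖ (CharGroup A))).trans <|
    flipEquiv.symm.trans (ModuleCat.homEquiv (M := A) (N := .of R (CharGroup N))).symm

theorem charHomEquiv_comp {N N' : ModuleCat.{u} Rᵐᵒᵖ} {A : ModuleCat.{u} R} (f : N ⟶ N')
    (g : N' ⟶ charRight R A) :
    charHomEquiv R N A (f ≫ g) = charHomEquiv R N' A g ≫ charLeftMap R f :=
  rfl

theorem subsingleton_ext_charRight_iff (N : ModuleCat.{u} Rᵐᵒᵖ) (A : ModuleCat.{u} R) (i : ℕ) :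
    Subsingleton (Abelian.Ext N (charRight R A) (i + 1)) ↔
      Subsingleton (Abelian.Ext A (charLeft R N) (i + 1)) := by
  have hT (N : ModuleCat.{u} Rᵐᵒᵖ) := N.shortExact_projectiveShortComplex
  have hT' (N : ModuleCat.{u} Rᵐᵒᵖ) := charLeftShortComplex_shortExact R (hT N)
  induction i generalizing N with
  | zero =>
    let T := N.projectiveShortComplex
    calc Subsingleton (Abelian.Ext N (charRight R A) 1)
      _ ↔ ∀ f : T.X₁ ⟶ charRight R A, ∃ g : T.X₂ ⟶ charRight R A, T.f ≫ g = f :=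
        subsingleton_ext_one_iff_of_projective (hT N) _
      _ ↔ ∀ f : A ⟶ charLeft R T.X₁, ∃ g : A ⟶ charLeft R T.X₂, g ≫ charLeftMap R T.f = f :=
        (charHomEquiv R _ A).forall_congr fun {f} => (charHomEquiv R _ A).exists_congr fun g => by
          rw [← charHomEquiv_comp, (charHomEquiv R _ A).injective.eq_iff]
      _ ↔ _ := (subsingleton_ext_one_iff_of_injective (hT' N) A).symm
  | succ i ih =>
    let N₁ := N.projectiveShortComplex.X₁
    calc Subsingleton (Abelian.Ext N (charRight R A) (i + 2))
      _ ↔ Subsingleton (Abelian.Ext N₁ (charRight R A) (i + 1)) :=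
        subsingleton_ext_succ_succ_iff_of_projective (hT N) _ i
      _ ↔ Subsingleton (Abelian.Ext A (charLeft R N₁) (i + 1)) := ih N₁
      _ ↔ _ := (subsingleton_ext_succ_succ_iff_of_injective (hT' N) A i).symm

theorem extVanish_charRight_iff_torVanish (N : ModuleCat.{u} Rᵐᵒᵖ) (A : ModuleCat.{u} R) (i : ℕ) :
    extVanish Rᵐᵒᵖ (i + 1) N (charRight R A) ↔ torVanish R (i + 1) N A := by
  rw [torVanish, extVanish_succ_iff_subsingleton_ext, extVanish_succ_iff_subsingleton_ext,
    subsingleton_ext_charRight_iff]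

end Balance

section LinearMapGroups

variable {R : Type*} [Ring R] {A P Q M : Type*} [AddCommGroup A] [Module R A] [AddCommGroup P]
  [Module R P] [AddCommGroup Q] [Module R Q] [AddCommGroup M] [Module R M]

variable (A) in
/-- Precomposition with a linear map, as an additive map between groups of linear maps. -/
def precomp (d : P →ₗ[R] Q) : (Q →ₗ[R] A) →+ (P →ₗ[R] A) :=
  (LinearMap.lcomp ℤ A d).toAddMonoidHom

theorem precomp_exact {f : P →ₗ[R] Q} {g : Q →ₗ[R] M} (hfg : Function.Exact f g)
    (hg : Function.Surjective g) : Function.Exact (precomp A g) (precomp A f) := by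
  refine fun u => ⟨fun hu => ?_, ?_⟩
  · have hker : LinearMap.ker g ≤ LinearMap.ker u := by
      rw [hfg.linearMap_ker_eq]
      rintro _ ⟨x, rfl⟩
      exact LinearMap.congr_fun hu x
    let e := g.quotKerEquivOfSurjective hg
    refine ⟨(LinearMap.ker g).liftQ u hker ∘ₗ e.symm.toLinearMap, LinearMap.ext fun y => ?_⟩
    have hy : e.symm (g y) = Submodule.Quotient.mk y := e.symm_apply_eq.2 rfl
    exact congrArg ((LinearMap.ker g).liftQ u hker) hy
  · rintro ⟨w, rfl⟩
    exact LinearMap.ext fun x => (congrArg w (hfg.apply_apply_eq_zero x)).trans w.map_zero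

variable (A) in
/-- The map `A → Hom(P, A)` sending `a` to `p ↦ φ p • a`. -/
def smulRightHom (φ : P →ₗ[R] R) : A →+ (P →ₗ[R] A) where
  toFun := φ.smulRight
  map_zero' := LinearMap.ext fun p => smul_zero (φ p)
  map_add' a b := LinearMap.ext fun p => smul_add (φ p) a b

theorem sum_smulRight_coord {ι : Type*} [Fintype ι] (b : Module.Basis ι R P) (u : P →ₗ[R] M) :
    ∑ i, (b.coord i).smulRight (u (b i)) = u := by
  ext p
  conv_rhs => rw [← b.sum_repr p, map_sum]
  simp only [LinearMap.sum_apply, LinearMap.smulRight_apply, Module.Basis.coord_apply, map_smul]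

end LinearMapGroups

section HomBidual

open CharGroup

variable {R : Type u} [Ring R] {A : Type u} [AddCommGroup A] [Module R A] {P Q : Type u}
  [AddCommGroup P] [Module R P] [AddCommGroup Q] [Module R Q]

/-- The canonical map `Hom(P, A)⋆⋆ → Hom(P, A⋆⋆)`, whose value at `p` is the double dual of
evaluation at `p`. -/
noncomputable def homBidual :
    CharGroup (CharGroup (P →ₗ[R] A)) →+ (P →ₗ[R] CharGroup (CharGroup A)) where
  toFun Φ :=
    { toFun := fun p => bidual (LinearMap.evalAddMonoidHom p) Φ
      map_add' := fun p q => by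
        rw [← AddMonoidHom.add_apply, ← map_add]
        congr 2
        ext u
        exact u.map_add p q
      map_smul' := fun r p => by
        have h : LinearMap.evalAddMonoidHom (r • p) =
            (DistribSMul.toAddMonoidHom A r).comp
              (LinearMap.evalAddMonoidHom p : (P →ₗ[R] A) →+ A) := by
          ext u
          exact u.map_smul r p
        rw [h]
        rfl }
  map_zero' := rfl
  map_add' _ _ := rfl

theorem homBidual_bidual_precomp (d : P →ₗ[R] Q) (Φ : CharGroup (CharGroup (Q →ₗ[R] A))) :
    homBidual (bidual (precomp A d) Φ) = homBidual Φ ∘ₗ d :=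
  rfl

theorem homBidual_bidual_smulRightHom (φ : P →ₗ[R] R) (x : CharGroup (CharGroup A)) :
    homBidual (bidual (smulRightHom A φ) x) = φ.smulRight x :=
  rfl

variable {ι : Type*}

theorem homBidual_sum_bidual_smulRightHom [Fintype ι] (b : Module.Basis ι R P)
    (u : P →ₗ[R] CharGroup (CharGroup A)) :
    homBidual (∑ i, bidual (smulRightHom A (b.coord i)) (u (b i))) = u := by
  rw [map_sum]
  exact sum_smulRight_coord b u

theorem sum_bidual_smulRightHom_homBidual [Fintype ι] (b : Module.Basis ι R P)
    (Φ : CharGroup (CharGroup (P →ₗ[R] A))) :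
    ∑ i, bidual (smulRightHom A (b.coord i)) (homBidual Φ (b i)) = Φ := by
  have hid : ∑ i, (smulRightHom A (b.coord i)).comp (LinearMap.evalAddMonoidHom (b i)) =
      AddMonoidHom.id (P →ₗ[R] A) := AddMonoidHom.ext fun u => by
    rw [AddMonoidHom.finsetSum_apply]
    exact sum_smulRight_coord b u
  calc ∑ i, bidual (smulRightHom A (b.coord i)) (homBidual Φ (b i))
    _ = (∑ i, bidual ((smulRightHom A (b.coord i)).comp
          (LinearMap.evalAddMonoidHom (b i)))) Φ := by
      rw [AddMonoidHom.finsetSum_apply]; rfl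
    _ = bidual (AddMonoidHom.id (P →ₗ[R] A)) Φ := by rw [← map_sum, hid]
    _ = Φ := rfl

theorem homBidual_bijective_of_basis [Finite ι] (b : Module.Basis ι R P) :
    Function.Bijective (homBidual (R := R) (A := A) (P := P)) :=
  have := Fintype.ofFinite ι
  Function.bijective_iff_has_inverse.2
    ⟨fun u => ∑ i, bidual (smulRightHom A (b.coord i)) (u (b i)),
      sum_bidual_smulRightHom_homBidual b,
      homBidual_sum_bidual_smulRightHom b⟩

theorem homBidual_surjective [Module.FinitePresentation R P] :
    Function.Surjective (homBidual (R := R) (A := A) (P := P)) := by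
  intro u
  obtain ⟨n, m, f, g, hf, hgf⟩ := Module.FinitePresentation.exists_fin' R P
  obtain ⟨Φ, hΦ⟩ := (homBidual_bijective_of_basis (Pi.basisFun R (Fin n))).2 (u ∘ₗ f)
  have hΦg : bidual (precomp A g) Φ = 0 := by
    refine (homBidual_bijective_of_basis (Pi.basisFun R (Fin m))).1 ?_
    rw [homBidual_bidual_precomp, hΦ, map_zero, LinearMap.comp_assoc,
      hgf.linearMap_comp_eq_zero, LinearMap.comp_zero]
  obtain ⟨Ψ, rfl⟩ := (bidual_exact (precomp_exact hgf hf) Φ).1 hΦg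
  exact ⟨Ψ, (LinearMap.cancel_right hf).1 hΦ⟩

theorem precomp_bidual_surjective [Module.FinitePresentation R P] {d : P →ₗ[R] Q}
    (hd : Function.Surjective (precomp A d)) :
    Function.Surjective (precomp (CharGroup (CharGroup A)) d) := by
  intro u
  obtain ⟨Φ, rfl⟩ := homBidual_surjective u
  obtain ⟨Ψ, rfl⟩ := bidual_surjective hd Φ
  exact ⟨homBidual Ψ, (homBidual_bidual_precomp d Ψ).symm⟩

end HomBidual

section SpecialSFP

open CharGroup

variable {R : Type u} [Ring R] {n : ℕ} {K : ModuleCat.{u} R}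

theorem IsSpecialSFP.exists_syzygy (hK : IsSpecialSFP R n K) :
    ∃ (P : ModuleCat.{u} R) (p : P →ₗ[R] K), Module.Projective R P ∧ Module.Finite R P ∧
      Function.Surjective p ∧ IsSpecialSFP R (n + 1) (.of R (LinearMap.ker p)) := by
  obtain ⟨U, F, d, π, hproj, hfin, hπ, h₀, hd, hK⟩ := hK
  suffices h : ∃ p : F n →ₗ[R] K, Function.Surjective p ∧ LinearMap.ker p = LinearMap.range (d n) by
    obtain ⟨p, hp, hker⟩ := h
    exact ⟨F n, p, hproj n, hfin n le_rfl, hp, U, F, d, π, hproj,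
      fun i hi => hfin i (Nat.le_of_succ_le hi), hπ, h₀, hd, ⟨LinearEquiv.ofEq _ _ hker⟩⟩
  cases n with
  | zero =>
    obtain ⟨e⟩ : Nonempty (K ≃ₗ[R] U) := hK
    exact ⟨e.symm.toLinearMap ∘ₗ π, e.symm.surjective.comp hπ,
      by rw [LinearEquiv.ker_comp, h₀.linearMap_ker_eq]⟩
  | succ n =>
    obtain ⟨e⟩ : Nonempty (K ≃ₗ[R] LinearMap.range (d n)) := hK
    exact ⟨e.symm.toLinearMap ∘ₗ (d n).rangeRestrict,
      e.symm.surjective.comp (d n).surjective_rangeRestrict,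
      by rw [LinearEquiv.ker_comp, LinearMap.ker_rangeRestrict, (hd n).linearMap_ker_eq]⟩

theorem IsSpecialSFP.finite (hK : IsSpecialSFP R n K) : Module.Finite R K := by
  obtain ⟨P, p, -, _, hp, -⟩ := hK.exists_syzygy
  exact Module.Finite.of_surjective p hp

theorem IsSpecialSFP.finitePresentation (hK : IsSpecialSFP R n K) :
    Module.FinitePresentation R K := by
  obtain ⟨P, p, _, _, hp, hker⟩ := hK.exists_syzygy
  have := Module.finitePresentation_of_projective R P
  exact Module.finitePresentation_of_surjective p hp (Module.Finite.iff_fg.1 hker.finite)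

theorem extVanish_one_iff_of_surjective {P : ModuleCat.{u} R} [Module.Projective R P]
    (p : P →ₗ[R] K) (hp : Function.Surjective p) (A : ModuleCat.{u} R) :
    extVanish R 1 K A ↔ Function.Surjective (precomp A (LinearMap.ker p).subtype) := by
  have hT := LinearMap.shortExact_shortComplexKer hp
  have : Projective p.shortComplexKer.X₂ := (IsProjective.iff_projective P).1 inferInstance
  rw [extVanish_succ_iff_subsingleton_ext]
  exact (subsingleton_ext_one_iff_of_projective hT A).trans <|
    ModuleCat.homEquiv.forall_congr fun {f} => ModuleCat.homEquiv.exists_congr fun g =>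
      ModuleCat.homEquiv.injective.eq_iff.symm

theorem extVanish_succ_succ_iff_of_surjective {P : ModuleCat.{u} R} [Module.Projective R P]
    (p : P →ₗ[R] K) (hp : Function.Surjective p) (A : ModuleCat.{u} R) (i : ℕ) :
    extVanish R (i + 2) K A ↔ extVanish R (i + 1) (.of R (LinearMap.ker p)) A := by
  have hT := LinearMap.shortExact_shortComplexKer hp
  have : Projective p.shortComplexKer.X₂ := (IsProjective.iff_projective P).1 inferInstance
  rw [extVanish_succ_iff_subsingleton_ext, extVanish_succ_iff_subsingleton_ext]
  exact subsingleton_ext_succ_succ_iff_of_projective hT A i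

theorem IsSpecialSFP.extVanish_charLeft_charRight (hK : IsSpecialSFP R n K) {A : ModuleCat.{u} R}
    {k : ℕ} (h : extVanish R (k + 1) K A) :
    extVanish R (k + 1) K (charLeft R (charRight R A)) := by
  induction k generalizing n K with
  | zero =>
    obtain ⟨P, p, _, _, hp, hker⟩ := hK.exists_syzygy
    have := hker.finitePresentation
    rw [extVanish_one_iff_of_surjective p hp] at h ⊢
    exact precomp_bidual_surjective h
  | succ k ih =>
    obtain ⟨P, p, _, _, hp, hker⟩ := hK.exists_syzygy
    rw [extVanish_succ_succ_iff_of_surjective p hp] at h ⊢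
    exact ih hker h

theorem nwfdLE_charRight {k : ℕ} {A : ModuleCat.{u} R} (hA : nwidLE R n k A) :
    nwfdLE R n k (charRight R A) :=
  fun K hK => hK.extVanish_charLeft_charRight (hA K hK)

end SpecialSFP

theorem stmt8_general (R : Type u) [Ring R] (n k i : ℕ) (N : ModuleCat.{u} Rᵐᵒᵖ)
    (hN : ∀ M : ModuleCat.{u} Rᵐᵒᵖ, nwfdLE R n k M → extVanish Rᵐᵒᵖ (i + 1) N M) :
    ∀ A : ModuleCat.{u} R, nwidLE R n k A → torVanish R (i + 1) N A :=
  fun A hA => (extVanish_charRight_iff_torVanish R N A i).1 (hN _ (nwfdLE_charRight hA))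

/-- if `Ext^1(N, M) = 0` for every right module `M` of `n`-weak flat
dimension at most `k`, then `Tor_1(A, N) = 0` for every left module `A` of `n`-weak
injective dimension at most `k`. -/
theorem stmt8 (R : Type u) [Ring R] (n k : ℕ) (N : ModuleCat.{u} Rᵐᵒᵖ)
    (hN : ∀ M : ModuleCat.{u} Rᵐᵒᵖ, nwfdLE R n k M → extVanish Rᵐᵒᵖ 1 N M) :
    ∀ A : ModuleCat.{u} R, nwidLE R n k A → torVanish R 1 N A :=
  stmt8_general R n k 0 N hN
end

section
/- Assume n-wid(_R R) ≤ k. A right R-module M is reduced and (n,k)-weak cotorsion if and only if M is the kernel of a WF^n_k(R^op)-cover φ : N → D with N injective. -/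
/-!
Common definitions for formalizing "(n,k)-weak cotorsion modules" over an arbitrary
(not necessarily commutative) ring `R`.  Left `R`-modules are objects of
`ModuleCat R`, right `R`-modules are objects of `ModuleCat Rᵐᵒᵖ`.

Since Mathlib does not provide `Tor` of a right module with a left module over a
noncommutative ring, we encode the vanishing of `Tor_i^R(N, M)` (for `N` a right
module and `M` a left module) by the equivalent condition
`Ext^i_{Rᵐᵒᵖ}(N, M⋆) = 0`, where `M⋆ = Hom_ℤ(M, ℚ/ℤ)` is the character module
(a right module).  This is equivalent because `ℚ/ℤ` is an injective cogenerator: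
`Ext^i_{Rᵐᵒᵖ}(N, M⋆) ≅ (Tor_i^R(N, M))⋆`, and an abelian group vanishes iff its
character group does.
-/

open CategoryTheory

universe u

/-!
Let `φ : E → D` be surjective with `E` injective and kernel `M`. The long exact `Ext` sequence turns
`Ext¹(F, M) = 0` into the lifting of every map `F → D` along `φ`, so weak cotorsion of `M` is the
precover property of `φ`. The cover property is reducedness of `M`. If `φ g = φ`, then
`g - 1` takes values in `M` and is injective both on an injective hull of `ker g` inside `E` and on
a complement of the image of `g`; if `M` is reduced, both vanish and `g` is bijective. Conversely,
`1` minus a projection of `E` onto an injective submodule of `M` is an endomorphism over `D` which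
kills that submodule.

Injective right modules `E` lie in the class: for `P` finitely generated projective,
`Hom_R(P, E⁺)` is the character group of `Hom_{Rᵐᵒᵖ}(Hom_R(P, R), E)`, so exactness of `Hom_R(-, R)`
at a term of a resolution passes to `Hom_R(-, E⁺)`.
-/

section Extension

universe v

variable {X Y : Type*}

theorem exists_comp_eq_of_surjective {S N : Type*} [Ring S] [AddCommGroup X] [AddCommGroup Y]
    [AddCommGroup N] [Module S X] [Module S Y] [Module S N] {π : X →ₗ[S] Y}
    (hπ : Function.Surjective π) {t : X →ₗ[S] N} (ht : LinearMap.ker π ≤ LinearMap.ker t) :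
    ∃ h : Y →ₗ[S] N, h ∘ₗ π = t := by
  let e := π.quotKerEquivOfSurjective hπ
  refine ⟨(LinearMap.ker π).liftQ t ht ∘ₗ e.symm.toLinearMap, LinearMap.ext fun x => ?_⟩
  have he : e.symm (π x) = (LinearMap.ker π).mkQ x := by
    rw [LinearEquiv.symm_apply_eq]
    rfl
  simp [he]

theorem exists_comp_eq_of_injective {S : Type u} {N : Type v} [Ring S] [Small.{v} S]
    [AddCommGroup X] [AddCommGroup Y] [AddCommGroup N] [Module S X] [Module S Y] [Module S N]
    [Module.Injective S N] {β : X →ₗ[S] Y} {χ : X →ₗ[S] N}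
    (hχ : LinearMap.ker β ≤ LinearMap.ker χ) : ∃ χ' : Y →ₗ[S] N, χ' ∘ₗ β = χ := by
  obtain ⟨χ₀, rfl⟩ := exists_comp_eq_of_surjective β.surjective_rangeRestrict (t := χ)
    (by rwa [LinearMap.ker_rangeRestrict])
  obtain ⟨χ', rfl⟩ := Module.Injective.extension_property S N _ _ (LinearMap.range β).subtype
    (LinearMap.range β).injective_subtype χ₀
  exact ⟨χ', rfl⟩

end Extension

section Order

variable {α : Type*} [CompleteLattice α]

theorem exists_le_maximal_disjoint [IsCompactlyGenerated α] {a b : α} (h : Disjoint a b) :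
    ∃ c, b ≤ c ∧ Maximal (Disjoint a) c := by
  refine zorn_le_nonempty₀ {x | Disjoint a x} (fun C hC hchain _ _ => ?_) b h
  exact ⟨sSup C, hchain.directedOn.disjoint_sSup_right.2 hC, fun z hz => le_sSup hz⟩

theorem eq_bot_of_maximal_disjoint [IsModularLattice α] {a c l x : α}
    (hc : Maximal (Disjoint a) c) (hl : Disjoint c l) (hal : a ≤ l) (hxl : x ≤ l)
    (hax : Disjoint a x) : x = ⊥ := by
  have hdisj : Disjoint a (x ⊔ c) :=
    hax.disjoint_sup_right_of_disjoint_sup_left (hl.symm.mono_left (sup_le hal hxl))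
  have hxc : x ≤ c := le_sup_left.trans (hc.2 hdisj le_sup_right)
  exact disjoint_self.1 (hl.mono hxc hxl)

end Order

section Injective

variable {S E N : Type u} [Ring S] [AddCommGroup E] [AddCommGroup N] [Module S E] [Module S N]

theorem injective_of_comp_eq_id [Module.Injective S E] {i : N →ₗ[S] E} {r : E →ₗ[S] N}
    (hri : r ∘ₗ i = LinearMap.id) : Module.Injective S N where
  out X Y _ _ _ _ j hj f := by
    obtain ⟨g, hg⟩ := Module.Injective.out j hj (i ∘ₗ f)
    exact ⟨r ∘ₗ g, fun x => by simpa [hg] using LinearMap.congr_fun hri (f x)⟩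

theorem exists_injective_linearMap (N : Type u) [AddCommGroup N] [Module S N] :
    ∃ (E : ModuleCat.{u} S) (ι : N →ₗ[S] E), Module.Injective S E ∧ Function.Injective ι := by
  let E := Injective.under (ModuleCat.of S N)
  have hE : Injective (ModuleCat.of S E) := inferInstanceAs (Injective E)
  exact ⟨E, (Injective.ι (ModuleCat.of S N)).hom, (Module.injective_iff_injective_object S E).2 hE,
    (ModuleCat.mono_iff_injective _).1 inferInstance⟩

theorem injective_of_maximal_disjoint [Module.Injective S E] {L C : Submodule S E}
    (hC : Maximal (Disjoint L) C) (hL : Maximal (Disjoint C) L) : Module.Injective S L := by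
  have hLC : Function.Injective (C.mkQ.domRestrict L) := by
    rw [LinearMap.injective_domRestrict_iff, Submodule.ker_mkQ]
    exact hC.1
  obtain ⟨θ, hθ⟩ := Module.Injective.extension_property S E _ _ _ hLC L.subtype
  let r : E →ₗ[S] E := θ ∘ₗ C.mkQ
  have hrL : ∀ x ∈ L, r x = x := fun x hx => LinearMap.congr_fun hθ ⟨x, hx⟩
  have hrC : ∀ x ∈ C, r x = 0 := fun x hx => by simp [r, (Submodule.Quotient.mk_eq_zero C).2 hx]
  -- `r` extends the projection of `L ⊕ C` onto `L`. Maximality of `C` gives `r⁻¹(C) = C`, so the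
  -- range of `r` meets `C` trivially and, by maximality of `L`, equals `L`.
  have hcomap : C.comap r ≤ C := by
    refine hC.2 (Submodule.disjoint_def.2 fun x hxL hx => ?_) fun x hx => by simp [hrC x hx]
    exact Submodule.disjoint_def.1 hC.1 x hxL (by simpa [hrL x hxL] using hx)
  have hrange : LinearMap.range r ≤ L := by
    refine hL.2 (Submodule.disjoint_def.2 ?_) fun x hx => ⟨x, hrL x hx⟩
    rintro _ hx ⟨e, rfl⟩
    exact hrC e (hcomap hx)
  exact injective_of_comp_eq_id (i := L.subtype) (r := r.codRestrict L fun e => hrange ⟨e, rfl⟩)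
    (LinearMap.ext fun x => Subtype.ext (hrL x x.2))

theorem exists_injective_essential_extension [Module.Injective S E] (K : Submodule S E) :
    ∃ L, K ≤ L ∧ Module.Injective S L ∧ ∀ X ≤ L, Disjoint K X → X = ⊥ := by
  obtain ⟨C, -, hC⟩ := exists_le_maximal_disjoint (disjoint_bot_right (a := K))
  obtain ⟨L, hKL, hL⟩ := exists_le_maximal_disjoint hC.1.symm
  have hCL : Maximal (Disjoint L) C :=
    ⟨hL.1.symm, fun X hX hCX => hC.2 (hX.mono_left hKL) hCX⟩
  exact ⟨L, hKL, injective_of_maximal_disjoint hCL hL,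
    fun X hXL hKX => eq_bot_of_maximal_disjoint hC hL.1 hKL hXL hKX⟩

end Injective

section Reduced

variable {S E D M N : Type u} [Ring S] [AddCommGroup E] [AddCommGroup D] [AddCommGroup M]
  [AddCommGroup N] [Module S E] [Module S D] [Module S M] [Module S N]

namespace IsReducedModule

theorem eq_bot_of_disjoint_ker (hM : IsReducedModule S (ModuleCat.of S M)) {f : E →ₗ[S] M}
    {L : Submodule S E} [Module.Injective S L] (hLf : Disjoint L (LinearMap.ker f)) : L = ⊥ := by
  let e := LinearEquiv.ofInjective (f.domRestrict L)
    (LinearMap.injective_domRestrict_iff.2 hLf)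
  have hrange : LinearMap.range (f.domRestrict L) = ⊥ :=
    hM _ (injective_of_comp_eq_id (i := e.symm.toLinearMap) (r := e.toLinearMap) (by simp))
  refine (Submodule.eq_bot_iff L).2 fun x hx => Submodule.disjoint_def.1 hLf x hx ?_
  exact LinearMap.congr_fun (LinearMap.range_eq_bot.1 hrange) ⟨x, hx⟩

theorem of_linearEquiv (hM : IsReducedModule S (ModuleCat.of S M)) (e : N ≃ₗ[S] M) :
    IsReducedModule S (ModuleCat.of S N) := fun L _ =>
  hM.eq_bot_of_disjoint_ker (f := e.toLinearMap) (by simp)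

variable {φ : E →ₗ[S] D} {g : E →ₗ[S] E}

theorem eq_bot_of_disjoint_ker_sub_id
    (hφ : IsReducedModule S (ModuleCat.of S (LinearMap.ker φ))) (hg : φ ∘ₗ g = φ)
    {L : Submodule S E} [Module.Injective S L]
    (hL : Disjoint L (LinearMap.ker (g - LinearMap.id))) : L = ⊥ := by
  have hmem : ∀ x, (g - LinearMap.id : E →ₗ[S] E) x ∈ LinearMap.ker φ := fun x => by
    simpa [sub_eq_zero] using LinearMap.congr_fun hg x
  refine hφ.eq_bot_of_disjoint_ker (f := (g - LinearMap.id).codRestrict _ hmem) ?_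
  rwa [LinearMap.ker_codRestrict]

theorem injective_of_comp_eq (hφ : IsReducedModule S (ModuleCat.of S (LinearMap.ker φ)))
    [Module.Injective S E] (hg : φ ∘ₗ g = φ) : Function.Injective g := by
  obtain ⟨L, hgL, _, hL⟩ := exists_injective_essential_extension (LinearMap.ker g)
  have hdisj : Disjoint (LinearMap.ker g) (L ⊓ LinearMap.ker (g - LinearMap.id)) :=
    Submodule.disjoint_def.2 fun x hx hx' => by
      simpa [LinearMap.mem_ker.1 hx] using LinearMap.mem_ker.1 hx'.2
  have hbot : L = ⊥ :=
    hφ.eq_bot_of_disjoint_ker_sub_id hg (disjoint_iff.2 (hL _ inf_le_left hdisj))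
  exact LinearMap.ker_eq_bot.1 (le_bot_iff.1 (hgL.trans hbot.le))

theorem surjective_of_comp_eq (hφ : IsReducedModule S (ModuleCat.of S (LinearMap.ker φ)))
    [Module.Injective S E] (hg : φ ∘ₗ g = φ) : Function.Surjective g := by
  obtain ⟨r, hr⟩ := Module.Injective.extension_property S E _ _ g
    (hφ.injective_of_comp_eq hg) LinearMap.id
  have hrg : ∀ x, r (g x) = x := LinearMap.congr_fun hr
  have hmem : ∀ x, (LinearMap.id - g ∘ₗ r : E →ₗ[S] E) x ∈ LinearMap.ker r :=
    fun x => by simp [hrg]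
  have : Module.Injective S (LinearMap.ker r) :=
    injective_of_comp_eq_id (i := (LinearMap.ker r).subtype)
      (r := (LinearMap.id - g ∘ₗ r).codRestrict _ hmem) (by ext; simp)
  have hdisj : Disjoint (LinearMap.ker r) (LinearMap.ker (g - LinearMap.id)) :=
    Submodule.disjoint_def.2 fun x hx hx' => by
      have hgx : g x = x := by simpa [sub_eq_zero] using hx'
      rw [← hrg x, hgx, LinearMap.mem_ker.1 hx]
  have hbot : LinearMap.ker r = ⊥ := hφ.eq_bot_of_disjoint_ker_sub_id hg hdisj
  exact fun x => ⟨r x, LinearMap.ker_eq_bot.1 hbot (hrg (r x))⟩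

theorem of_forall_injective (h : ∀ g : E →ₗ[S] E, φ ∘ₗ g = φ → Function.Injective g) :
    IsReducedModule S (ModuleCat.of S (LinearMap.ker φ)) := fun N _ => by
  let i : N →ₗ[S] E := (LinearMap.ker φ).subtype ∘ₗ N.subtype
  have hi : Function.Injective i := (LinearMap.ker φ).injective_subtype.comp N.injective_subtype
  obtain ⟨r, hr⟩ := Module.Injective.extension_property S N _ _ i hi LinearMap.id
  have hφi : ∀ x, φ (i x) = 0 := fun x => LinearMap.mem_ker.1 (N.subtype x).2
  have hri : ∀ x, r (i x) = x := LinearMap.congr_fun hr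
  have hg : Function.Injective (LinearMap.id - i ∘ₗ r : E →ₗ[S] E) :=
    h _ (LinearMap.ext fun x => by simp [hφi])
  refine (Submodule.eq_bot_iff N).2 fun x hx => ?_
  have hix : i ⟨x, hx⟩ = i 0 := hg (by simp [hri])
  exact congrArg Subtype.val (hi hix)

end IsReducedModule

theorem isReducedModule_ker_iff [Module.Injective S E] (φ : E →ₗ[S] D) :
    IsReducedModule S (ModuleCat.of S (LinearMap.ker φ)) ↔
      ∀ g : E →ₗ[S] E, φ ∘ₗ g = φ → Function.Bijective g :=
  ⟨fun hφ _ hg => ⟨hφ.injective_of_comp_eq hg, hφ.surjective_of_comp_eq hg⟩,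
    fun h => IsReducedModule.of_forall_injective fun g hg => (h g hg).1⟩

end Reduced

section Resolution

theorem quasiIso_toSingle₀Equiv_symm {𝒜 : Type*} [Category 𝒜] [Abelian 𝒜] {C : ChainComplex 𝒜 ℕ}
    {A : 𝒜} {f : C.X 0 ⟶ A} (hepi : Epi f) (hf : C.d 1 0 ≫ f = 0)
    (h₀ : (ShortComplex.mk _ _ hf).Exact) (h : ∀ i, C.ExactAt (i + 1)) :
    QuasiIso ((ChainComplex.toSingle₀Equiv C A).symm ⟨f, hf⟩) where
  quasiIsoAt
    | 0 => by
      have hf₀ : ((ChainComplex.toSingle₀Equiv C A).symm ⟨f, hf⟩).f 0 = f := by simp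
      rw [ChainComplex.quasiIsoAt₀_iff, ShortComplex.quasiIso_iff_of_zeros' _
        (C.shape 0 0 (by simp)) rfl rfl]
      refine (ShortComplex.exact_and_epi_g_iff_of_iso ?_).2 ⟨h₀, hepi⟩
      exact ShortComplex.isoMk (Iso.refl _) (Iso.refl _) (Iso.refl _)
        ((Category.id_comp _).trans (Category.comp_id _).symm)
        ((Category.id_comp f).trans (hf₀.symm.trans (Category.comp_id _).symm))
    | i + 1 => by
      rw [quasiIsoAt_iff_exactAt' _ _ (ChainComplex.exactAt_succ_single_obj _ _)]
      exact h i

variable {S : Type u} [Ring S] {A B : ModuleCat.{u} S}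

theorem extVanish_succ_iff (P : ProjectiveResolution A) (i : ℕ) : extVanish S (i + 1) A B ↔
    ∀ f : P.complex.X (i + 1) ⟶ B, P.complex.d (i + 2) (i + 1) ≫ f = 0 →
      ∃ g : P.complex.X i ⟶ B, P.complex.d (i + 1) i ≫ g = f := by
  rw [extVanish, ← ModuleCat.isZero_iff_subsingleton, (P.isoExt (R := ℤ) (i + 1) B).isZero_iff,
    ← HomologicalComplex.exactAt_iff_isZero_homology,
    HomologicalComplex.exactAt_iff' _ i (i + 1) (i + 2) (by simp) (by simp),
    ShortComplex.moduleCat_exact_iff]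
  rfl

/-- The linear maps `⋯ → G 1 → G 0 → A → 0` given by `d` and `π` form a projective resolution of
`A`. This is the shape in which `IsSpecialSFP` provides resolutions, with no bundled complex. -/
structure IsProjectiveResolution {G : ℕ → ModuleCat.{u} S} (d : ∀ i, G (i + 1) →ₗ[S] G i)
    (π : G 0 →ₗ[S] A) : Prop where
  projective : ∀ i, Module.Projective S (G i)
  surjective : Function.Surjective π
  exact_zero : Function.Exact (d 0) π
  exact_succ : ∀ i, Function.Exact (d (i + 1)) (d i)

theorem exists_isProjectiveResolution (A : ModuleCat.{u} S) :
    ∃ (G : ℕ → ModuleCat.{u} S) (d : ∀ i, G (i + 1) →ₗ[S] G i) (π : G 0 →ₗ[S] A),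
      IsProjectiveResolution d π := by
  let P := ProjectiveResolution.of A
  exact ⟨fun i => P.complex.X i, fun i => (P.complex.d (i + 1) i).hom, (P.π.f 0).hom,
    { projective i := (IsProjective.iff_projective (R := S) (P.complex.X i)).2 (P.projective i)
      surjective := (ModuleCat.epi_iff_surjective _).1 (inferInstanceAs (Epi (P.π.f 0)))
      exact_zero := (ShortComplex.ShortExact.moduleCat_exact_iff_function_exact _).1 P.exact₀
      exact_succ i :=
        (ShortComplex.ShortExact.moduleCat_exact_iff_function_exact _).1 (P.exact_succ i) }⟩

namespace IsProjectiveResolution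

variable {G : ℕ → ModuleCat.{u} S} {d : ∀ i, G (i + 1) →ₗ[S] G i} {π : G 0 →ₗ[S] A}

/-- The chain complex `⋯ → G 1 → G 0` underlying a projective resolution. -/
def complex (hG : IsProjectiveResolution d π) : ChainComplex (ModuleCat.{u} S) ℕ :=
  ChainComplex.of G (fun i => ModuleCat.ofHom (d i)) fun i =>
    ModuleCat.hom_ext (hG.exact_succ i).linearMap_comp_eq_zero

theorem complex_d (hG : IsProjectiveResolution d π) (i : ℕ) :
    hG.complex.d (i + 1) i = ModuleCat.ofHom (d i) :=
  ChainComplex.of_d G (fun i => ModuleCat.ofHom (d i)) i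

theorem complex_exactAt_succ (hG : IsProjectiveResolution d π) (i : ℕ) :
    hG.complex.ExactAt (i + 1) := by
  rw [HomologicalComplex.exactAt_iff' _ (i + 2) (i + 1) i (by simp) (by simp),
    ShortComplex.ShortExact.moduleCat_exact_iff_function_exact]
  change Function.Exact (hG.complex.d (i + 2) (i + 1)) (hG.complex.d (i + 1) i)
  rw [complex_d, complex_d]
  exact hG.exact_succ i

theorem complex_d_comp_augmentation (hG : IsProjectiveResolution d π) :
    hG.complex.d 1 0 ≫ ModuleCat.ofHom π = 0 := by
  rw [complex_d]
  exact ModuleCat.hom_ext hG.exact_zero.linearMap_comp_eq_zero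

theorem exact_complex_d_augmentation (hG : IsProjectiveResolution d π) :
    (ShortComplex.mk _ _ hG.complex_d_comp_augmentation).Exact := by
  rw [ShortComplex.ShortExact.moduleCat_exact_iff_function_exact]
  change Function.Exact (hG.complex.d 1 0) π
  rw [complex_d]
  exact hG.exact_zero

/-- The bundled `ProjectiveResolution` with the given terms, differentials and augmentation. -/
noncomputable def projectiveResolution (hG : IsProjectiveResolution d π) :
    ProjectiveResolution A where
  complex := hG.complex
  projective i := (IsProjective.iff_projective (R := S) (G i)).1 (hG.projective i)
  π := (ChainComplex.toSingle₀Equiv hG.complex A).symm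
    ⟨ModuleCat.ofHom π, hG.complex_d_comp_augmentation⟩
  quasiIso := quasiIso_toSingle₀Equiv_symm ((ModuleCat.epi_iff_surjective _).2 hG.surjective) _
    hG.exact_complex_d_augmentation hG.complex_exactAt_succ

theorem extVanish_succ_iff (hG : IsProjectiveResolution d π) (i : ℕ) :
    extVanish S (i + 1) A B ↔
      ∀ f : G (i + 1) →ₗ[S] B, f ∘ₗ d (i + 1) = 0 → ∃ g : G i →ₗ[S] B, g ∘ₗ d i = f := by
  have hcomplex := _root_.extVanish_succ_iff (B := B) hG.projectiveResolution i
  change _ ↔ ∀ f : G (i + 1) ⟶ B, hG.complex.d (i + 2) (i + 1) ≫ f = 0 →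
    ∃ g : G i ⟶ B, hG.complex.d (i + 1) i ≫ g = f at hcomplex
  rw [hcomplex, complex_d, complex_d]
  constructor
  · intro h f hf
    obtain ⟨g, hg⟩ := h (ModuleCat.ofHom f) (ModuleCat.hom_ext hf)
    exact ⟨g.hom, congrArg ModuleCat.Hom.hom hg⟩
  · intro h f hf
    obtain ⟨g, hg⟩ := h f.hom (congrArg ModuleCat.Hom.hom hf)
    exact ⟨ModuleCat.ofHom g, ModuleCat.hom_ext hg⟩

theorem extVanish_one_iff (hG : IsProjectiveResolution d π) : extVanish S 1 A B ↔
    ∀ f : LinearMap.ker π →ₗ[S] B, ∃ g : G 0 →ₗ[S] B, g.domRestrict (LinearMap.ker π) = f := by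
  let d₀ : G 1 →ₗ[S] LinearMap.ker π := (d 0).codRestrict _ hG.exact_zero.apply_apply_eq_zero
  have hd₀ : Function.Surjective d₀ := fun ⟨x, hx⟩ => by
    obtain ⟨y, rfl⟩ := (hG.exact_zero x).1 hx
    exact ⟨y, rfl⟩
  have hd₁ : d₀ ∘ₗ d 1 = 0 := LinearMap.ext fun x =>
    Subtype.ext ((hG.exact_succ 0).apply_apply_eq_zero x)
  rw [hG.extVanish_succ_iff 0]
  constructor
  · intro h f
    obtain ⟨g, hg⟩ := h (f ∘ₗ d₀) (by rw [LinearMap.comp_assoc, hd₁, LinearMap.comp_zero])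
    exact ⟨g, LinearMap.cancel_right hd₀ |>.1 hg⟩
  · intro h f hf
    have hker : LinearMap.ker d₀ ≤ LinearMap.ker f := fun x hx => by
      obtain ⟨y, rfl⟩ := (hG.exact_succ 0 x).1 (congrArg Subtype.val hx)
      exact LinearMap.congr_fun hf y
    obtain ⟨f₀, rfl⟩ := exists_comp_eq_of_surjective hd₀ hker
    obtain ⟨g, rfl⟩ := h f₀
    exact ⟨g, rfl⟩

end IsProjectiveResolution

theorem exists_projective_presentation_extVanish_one_iff (A : ModuleCat.{u} S) :
    ∃ (P : ModuleCat.{u} S) (π : P →ₗ[S] A), Module.Projective S P ∧ Function.Surjective π ∧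
      ∀ B : ModuleCat.{u} S, extVanish S 1 A B ↔
        ∀ f : LinearMap.ker π →ₗ[S] B, ∃ g : P →ₗ[S] B, g.domRestrict (LinearMap.ker π) = f := by
  obtain ⟨G, d, π, hG⟩ := exists_isProjectiveResolution A
  exact ⟨G 0, π, hG.projective 0, hG.surjective, fun _ => hG.extVanish_one_iff⟩

end Resolution

section Lifting

variable {S : Type u} [Ring S] {F M : ModuleCat.{u} S} {E D : Type u} [AddCommGroup E]
  [AddCommGroup D] [Module S E] [Module S D]

theorem exists_comp_eq_of_extVanish_one (hF : extVanish S 1 F M) {ι : M →ₗ[S] E} {ψ : E →ₗ[S] D}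
    (hι : Function.Injective ι) (hex : Function.Exact ι ψ) (hψ : Function.Surjective ψ)
    (s : F →ₗ[S] D) : ∃ h : F →ₗ[S] E, ψ ∘ₗ h = s := by
  obtain ⟨P, π, _, hπ, hP⟩ := exists_projective_presentation_extVanish_one_iff F
  obtain ⟨t, ht⟩ := Module.projective_lifting_property ψ (s ∘ₗ π) hψ
  have hψt : ∀ x, ψ (t x) = s (π x) := LinearMap.congr_fun ht
  have hrange : ∀ x : LinearMap.ker π, t x ∈ LinearMap.range ι := fun x =>
    (hex _).1 (by rw [hψt, x.2, map_zero])
  let e := LinearEquiv.ofInjective ι hι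
  obtain ⟨g, hg⟩ := (hP M).1 hF
    (e.symm.toLinearMap ∘ₗ (t.domRestrict (LinearMap.ker π)).codRestrict _ hrange)
  have hιg : ∀ x ∈ LinearMap.ker π, ι (g x) = t x := fun x hx => by
    have heg : e (g x) = ⟨t x, hrange ⟨x, hx⟩⟩ :=
      e.symm_apply_eq.1 (LinearMap.congr_fun hg ⟨x, hx⟩).symm |>.symm
    exact congrArg Subtype.val heg
  obtain ⟨h, hh⟩ := exists_comp_eq_of_surjective hπ (t := t - ι ∘ₗ g) fun x hx => by
    simp [hιg x hx]
  refine ⟨h, (LinearMap.cancel_right hπ).1 ?_⟩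
  rw [LinearMap.comp_assoc, hh, LinearMap.comp_sub, ← LinearMap.comp_assoc,
    hex.linearMap_comp_eq_zero, LinearMap.zero_comp, sub_zero, ht]

theorem extVanish_one_of_forall_exists_comp_eq [Module.Injective S E] {φ : E →ₗ[S] D}
    (e : M ≃ₗ[S] LinearMap.ker φ) (hφ : ∀ s : F →ₗ[S] D, ∃ h : F →ₗ[S] E, φ ∘ₗ h = s) :
    extVanish S 1 F M := by
  obtain ⟨P, π, -, hπ, hP⟩ := exists_projective_presentation_extVanish_one_iff F
  refine (hP M).2 fun f => ?_
  obtain ⟨t, ht⟩ := Module.Injective.extension_property S E _ _ (LinearMap.ker π).subtype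
    (LinearMap.ker π).injective_subtype ((LinearMap.ker φ).subtype ∘ₗ e.toLinearMap ∘ₗ f)
  have htf : ∀ x : LinearMap.ker π, t x = e (f x) := LinearMap.congr_fun ht
  obtain ⟨s, hs⟩ := exists_comp_eq_of_surjective hπ (t := φ ∘ₗ t) fun x hx =>
    (congrArg φ (htf ⟨x, hx⟩)).trans (e (f ⟨x, hx⟩)).2
  obtain ⟨h, rfl⟩ := hφ s
  have hker : ∀ x, (t - h ∘ₗ π : P →ₗ[S] E) x ∈ LinearMap.ker φ := fun x => by
    simpa [sub_eq_zero] using (LinearMap.congr_fun hs x).symm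
  refine ⟨e.symm.toLinearMap ∘ₗ (t - h ∘ₗ π).codRestrict _ hker, LinearMap.ext fun x => ?_⟩
  refine e.symm_apply_eq.2 (Subtype.ext ?_)
  simp [htf]

end Lifting

section CharacterModule

namespace CharGroup

theorem toHom_sum {N : Type u} [AddCommGroup N] {ι : Type*} (s : Finset ι) (f : ι → CharGroup N)
    (m : N) : toHom (∑ i ∈ s, f i) m = ∑ i ∈ s, toHom (f i) m :=
  map_sum (AddMonoidHom.mk' (fun x : CharGroup N => toHom x m) fun _ _ => rfl) f s

theorem toHom_smul {R N : Type u} [Ring R] [AddCommGroup N] [Module Rᵐᵒᵖ N] (r : R)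
    (x : CharGroup N) (m : N) : toHom (r • x) m = toHom x (MulOpposite.op r • m) :=
  rfl

end CharGroup

theorem exists_sum_smul_eq_of_projective (R P : Type*) [Ring R] [AddCommGroup P] [Module R P]
    [Module.Finite R P] [Module.Projective R P] :
    ∃ (m : ℕ) (p : Fin m → P) (l : Fin m → P →ₗ[R] R), ∀ x, ∑ i, l i x • p i = x := by
  obtain ⟨m, f, g, -, -, hfg⟩ := Module.Finite.exists_comp_eq_id_of_projective R P
  refine ⟨m, fun i => f (Pi.single i 1), fun i => LinearMap.proj i ∘ₗ g, fun x => ?_⟩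
  calc ∑ i, g x i • f (Pi.single i 1) = f (∑ i, g x i • Pi.single i 1) := by
        simp only [map_sum, map_smul]
    _ = f (g x) := by rw [← pi_eq_sum_univ']
    _ = x := LinearMap.congr_fun hfg x

variable {R : Type u} {P Q : Type*} {E : Type u} [Ring R] [AddCommGroup P] [AddCommGroup Q]
  [AddCommGroup E] [Module R P] [Module R Q] [Module Rᵐᵒᵖ E]

/-- The canonical biadditive pairing `P × E → Hom_{Rᵐᵒᵖ}(Hom_R(P, R), E)` of a left module `P` with
a right module `E`, sending `(x, e)` to `l ↦ e · l(x)`. It stands in for the map out of `E ⊗_R P`,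
which Mathlib does not have over a noncommutative ring. -/
def dualPairing : P →+ E →+ (P →ₗ[R] R) →ₗ[Rᵐᵒᵖ] E :=
  AddMonoidHom.mk' (fun x => AddMonoidHom.mk'
    (fun e =>
      { toFun := fun l => MulOpposite.op (l x) • e
        map_add' := fun l l' => by simp [add_smul]
        map_smul' := fun r l => by simp [mul_smul] })
    fun e e' => LinearMap.ext fun l => smul_add _ e e')
    fun x x' => AddMonoidHom.ext fun e => LinearMap.ext fun l => by simp [add_smul]

theorem dualPairing_apply (x : P) (e : E) (l : P →ₗ[R] R) :
    dualPairing x e l = MulOpposite.op (l x) • e :=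
  rfl

theorem dualPairing_smul (r : R) (x : P) (e : E) :
    dualPairing (R := R) (r • x) e = dualPairing x (MulOpposite.op r • e) :=
  LinearMap.ext fun l => by simp [dualPairing_apply, mul_smul]

/-- The natural map `Hom_{Rᵐᵒᵖ}(Hom_R(P, R), E)⁺ → Hom_R(P, E⁺)` induced by `dualPairing`, where
`⁺` is the character group; it is bijective for `P` finitely generated projective. -/
def charDual (χ : ((P →ₗ[R] R) →ₗ[Rᵐᵒᵖ] E) →ₗ[ℤ] AddCircle (1 : ℚ)) : P →ₗ[R] CharGroup E where
  toFun x := CharGroup.ofHom (χ.toAddMonoidHom.comp (dualPairing x))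
  map_add' x x' := CharGroup.hom_ext fun e =>
    (congrArg χ (by rw [map_add, AddMonoidHom.add_apply])).trans (map_add χ _ _)
  map_smul' r x := CharGroup.hom_ext fun e => congrArg χ (dualPairing_smul r x e)

theorem toHom_charDual (χ : ((P →ₗ[R] R) →ₗ[Rᵐᵒᵖ] E) →ₗ[ℤ] AddCircle (1 : ℚ)) (x : P) (e : E) :
    CharGroup.toHom (charDual χ x) e = χ (dualPairing x e) :=
  rfl

theorem charDual_comp (χ : ((Q →ₗ[R] R) →ₗ[Rᵐᵒᵖ] E) →ₗ[ℤ] AddCircle (1 : ℚ)) (b : P →ₗ[R] Q) :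
    charDual χ ∘ₗ b = charDual (χ ∘ₗ LinearMap.lcomp ℤ E (LinearMap.lcomp Rᵐᵒᵖ R b)) :=
  rfl

theorem exists_charDual_eq [Module.Finite R P] [Module.Projective R P] (f : P →ₗ[R] CharGroup E) :
    ∃ χ, charDual χ = f := by
  obtain ⟨m, p, l, hpl⟩ := exists_sum_smul_eq_of_projective R P
  let χ : ((P →ₗ[R] R) →ₗ[Rᵐᵒᵖ] E) →+ AddCircle (1 : ℚ) :=
    ∑ i, (CharGroup.toHom (f (p i))).comp (LinearMap.applyₗ' ℤ (l i)).toAddMonoidHom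
  refine ⟨χ.toIntLinearMap, LinearMap.ext fun x => CharGroup.hom_ext fun e => ?_⟩
  calc χ (dualPairing x e)
      = ∑ i, CharGroup.toHom (f (p i)) (MulOpposite.op (l i x) • e) :=
        AddMonoidHom.finsetSum_apply _ _ _
    _ = CharGroup.toHom (∑ i, l i x • f (p i)) e := by
        simp only [CharGroup.toHom_sum, CharGroup.toHom_smul]
    _ = CharGroup.toHom (f x) e := by
        simp only [← map_smul, ← map_sum, hpl]

theorem eq_zero_of_charDual_eq_zero [Module.Finite R P] [Module.Projective R P]
    {χ : ((P →ₗ[R] R) →ₗ[Rᵐᵒᵖ] E) →ₗ[ℤ] AddCircle (1 : ℚ)} (hχ : charDual χ = 0) : χ = 0 := by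
  obtain ⟨m, p, l, hpl⟩ := exists_sum_smul_eq_of_projective R P
  have hspan : ∀ u : P →ₗ[R] R, ∑ i, MulOpposite.op (u (p i)) • l i = u := fun u =>
    LinearMap.ext fun x => by
      conv_rhs => rw [← hpl x]
      simp
  ext h
  have hh : h = ∑ i, dualPairing (p i) (h (l i)) := LinearMap.ext fun u => by
    conv_lhs => rw [← hspan u]
    simp [dualPairing_apply]
  rw [hh, map_sum]
  refine Finset.sum_eq_zero fun i _ => ?_
  rw [← toHom_charDual, hχ]
  rfl

theorem exists_comp_eq_charGroup {A B C : Type*} [AddCommGroup A] [AddCommGroup B]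
    [AddCommGroup C] [Module R A] [Module R B] [Module R C] [Module.Finite R A]
    [Module.Projective R A] [Module.Finite R B] [Module.Projective R B] [Module.Injective Rᵐᵒᵖ E]
    {a : A →ₗ[R] B} {b : B →ₗ[R] C}
    (hR : ∀ f : B →ₗ[R] R, f ∘ₗ a = 0 → ∃ g : C →ₗ[R] R, g ∘ₗ b = f)
    {f : B →ₗ[R] CharGroup E} (hf : f ∘ₗ a = 0) : ∃ g : C →ₗ[R] CharGroup E, g ∘ₗ b = f := by
  obtain ⟨χ, rfl⟩ := exists_charDual_eq f
  let aDual := LinearMap.lcomp Rᵐᵒᵖ R a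
  let bDual := LinearMap.lcomp Rᵐᵒᵖ R b
  have hχa : χ ∘ₗ LinearMap.lcomp ℤ E aDual = 0 := eq_zero_of_charDual_eq_zero hf
  have hker : LinearMap.ker (LinearMap.lcomp ℤ E bDual) ≤ LinearMap.ker χ := fun h hh => by
    have ha : LinearMap.ker aDual ≤ LinearMap.ker h := fun u hu => by
      obtain ⟨g, rfl⟩ := hR u hu
      exact LinearMap.congr_fun hh g
    obtain ⟨h', rfl⟩ := exists_comp_eq_of_injective ha
    exact LinearMap.congr_fun hχa h'
  have : Module.Injective ℤ (AddCircle (1 : ℚ)) := (Module.Baer.of_divisible _).injective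
  obtain ⟨χ', rfl⟩ := exists_comp_eq_of_injective hker
  exact ⟨charDual χ', charDual_comp χ' b⟩

end CharacterModule

section WeakFlat

variable {n k : ℕ}

theorem IsSpecialSFP.exists_isProjectiveResolution {S : Type u} [Ring S] {K : ModuleCat.{u} S}
    (hK : IsSpecialSFP S n K) :
    ∃ (G : ℕ → ModuleCat.{u} S) (d : ∀ i, G (i + 1) →ₗ[S] G i) (π : G 0 →ₗ[S] K),
      IsProjectiveResolution d π ∧ ∀ i, Module.Finite S (G i) := by
  obtain ⟨U, F, d, π, hF, hfin, hπ, h₀, hd, hKn⟩ := hK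
  cases n with
  | zero =>
    obtain ⟨e⟩ : Nonempty ((K : Type u) ≃ₗ[S] U) := by simpa using hKn
    exact ⟨F, d, e.symm.toLinearMap ∘ₗ π,
      { projective := hF
        surjective := e.symm.surjective.comp hπ
        exact_zero := fun x => by simpa using h₀ x
        exact_succ := hd }, fun i => hfin i (Nat.zero_le i)⟩
  | succ n =>
    obtain ⟨e⟩ : Nonempty ((K : Type u) ≃ₗ[S] LinearMap.range (d n)) := by simpa using hKn
    refine ⟨fun i => F (n + 1 + i), fun i => d (n + 1 + i),
      e.symm.toLinearMap ∘ₗ (d n).rangeRestrict,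
      { projective := fun i => hF _
        surjective := e.symm.surjective.comp (d n).surjective_rangeRestrict
        exact_zero := fun x => ?_
        exact_succ := fun i => hd _ }, fun i => hfin _ (Nat.le_add_right _ i)⟩
    rw [← hd n x]
    simp only [LinearMap.comp_apply, LinearEquiv.coe_coe, LinearEquiv.map_eq_zero_iff]
    exact Subtype.ext_iff

theorem nwfdLE_of_injective {R : Type u} [Ring R] (h : nwidLE R n k (ModuleCat.of R R))
    (E : ModuleCat.{u} Rᵐᵒᵖ) [Module.Injective Rᵐᵒᵖ E] : nwfdLE R n k E := fun K hK => by
  obtain ⟨G, d, π, hG, _⟩ := hK.exists_isProjectiveResolution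
  have := hG.projective
  exact (hG.extVanish_succ_iff k).2 fun f hf =>
    exists_comp_eq_charGroup ((hG.extVanish_succ_iff k).1 (h K hK)) hf

end WeakFlat

theorem stmt10_general (S : Type u) [Ring S] (𝒞 : ModuleCat.{u} S → Prop)
    (h𝒞 : ∀ E : ModuleCat.{u} S, Module.Injective S E → 𝒞 E) (M : ModuleCat.{u} S) :
    (IsReducedModule S M ∧ ∀ N, 𝒞 N → extVanish S 1 N M) ↔
      ∃ (E D : ModuleCat.{u} S) (φ : E →ₗ[S] D),
        Module.Injective S E ∧ IsCover S 𝒞 E D φ ∧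
        Nonempty ((M : Type u) ≃ₗ[S] LinearMap.ker φ) := by
  constructor
  · rintro ⟨hM, hExt⟩
    obtain ⟨E, ι, hE, hι⟩ := exists_injective_linearMap (S := S) M
    let φ := (LinearMap.range ι).mkQ
    have hker : LinearMap.ker φ = LinearMap.range ι := Submodule.ker_mkQ _
    let e : M ≃ₗ[S] LinearMap.ker φ :=
      (LinearEquiv.ofInjective ι hι).trans (LinearEquiv.ofEq _ _ hker.symm)
    have hlift : ∀ F, 𝒞 F → ∀ s : F →ₗ[S] E ⧸ LinearMap.range ι, ∃ h : F →ₗ[S] E, φ ∘ₗ h = s :=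
      fun F hF => exists_comp_eq_of_extVanish_one (hExt F hF) hι (LinearMap.exact_iff.2 hker)
        (Submodule.mkQ_surjective _)
    have hauto : ∀ g : E →ₗ[S] E, φ ∘ₗ g = φ → Function.Bijective g :=
      (isReducedModule_ker_iff φ).1 (hM.of_linearEquiv e.symm)
    exact ⟨E, ModuleCat.of S (E ⧸ LinearMap.range ι), φ, hE, ⟨⟨h𝒞 E hE, hlift⟩, hauto⟩, ⟨e⟩⟩
  · rintro ⟨E, D, φ, hE, ⟨⟨-, hlift⟩, hauto⟩, ⟨e⟩⟩
    exact ⟨((isReducedModule_ker_iff φ).2 hauto).of_linearEquiv e,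
      fun F hF => extVanish_one_of_forall_exists_comp_eq e (hlift F hF)⟩

/-- assume `n-wid(_R R) ≤ k` (and, as in the context, that every right
module has a `WF^n_k(R^op)`-cover).  A right module `M` is reduced and `(n,k)`-weak
cotorsion iff `M` is the kernel of a `WF^n_k(R^op)`-cover `φ : E → D` with `E`
injective. -/
theorem stmt10 (R : Type u) [Ring R] (n k : ℕ)
    (h : nwidLE R n k (ModuleCat.of R R))
    (hcov : ∀ D : ModuleCat.{u} Rᵐᵒᵖ, ∃ (E : ModuleCat.{u} Rᵐᵒᵖ)
      (φ : E →ₗ[Rᵐᵒᵖ] D), IsCover Rᵐᵒᵖ (nwfdLE R n k) E D φ)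
    (M : ModuleCat.{u} Rᵐᵒᵖ) :
    (IsReducedModule Rᵐᵒᵖ M ∧ IsNKWeakCotorsion R n k M) ↔
      ∃ (E D : ModuleCat.{u} Rᵐᵒᵖ) (φ : E →ₗ[Rᵐᵒᵖ] D),
        Module.Injective Rᵐᵒᵖ E ∧ IsCover Rᵐᵒᵖ (nwfdLE R n k) E D φ ∧
        Nonempty ((M : Type u) ≃ₗ[Rᵐᵒᵖ] LinearMap.ker φ) :=
  stmt10_general Rᵐᵒᵖ (nwfdLE R n k) (fun E _ => nwfdLE_of_injective h E) M
end
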